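/- Let {X_t}_{t≥1} be a stationary binary Markov chain with parameters (a, b), 0 < a, b < 1, a ≠ b, stationary distribution (π₀, π₁) = (b/(a+b), a/(a+b)), ℓ = log₂(a/b), 0 < D < min(π₀, π₁), μ_D = h₂(π₁) − h₂(D), and J_n(D) = Σ_{t=1}^n ȷ(X_t, D) with ȷ(x,D) = −log₂ π_x − h₂(D). Then (J_n(D) − n·μ_D)/√n converges in distribution as n → ∞ to the centered Gaussian law N(0, V_sl), where V_sl = (a·b·(2 − a − b)/(a + b)³)·(log₂(a/b))² > 0; the limit does not depend on D. -/

import Mathlib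

open MeasureTheory

/-- Stationary distribution of the binary Markov chain with parameters `(a, b)`:
`π₀ = b/(a+b)`, `π₁ = a/(a+b)` (state `1` encoded as `true`). -/
noncomputable def statDist (a b : ℝ) (x : Bool) : ℝ :=
  if x then a / (a + b) else b / (a + b)

/-- Transition probabilities of the binary Markov chain:
`P₀₀ = 1-a`, `P₀₁ = a`, `P₁₀ = b`, `P₁₁ = 1-b`. -/
def transProb (a b : ℝ) (x y : Bool) : ℝ :=
  if x then (if y then 1 - b else b) else (if y then a else 1 - a)

/-- `X` is a stationary binary Markov chain with parameters `(a, b)` under `μ`: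
every finite path `(x_0, …, x_n)` has probability
`π_{x_0} ∏_{t=0}^{n-1} P_{x_t x_{t+1}}`. -/
def IsStatBinMarkov {Ω : Type*} [MeasurableSpace Ω] (μ : Measure Ω)
    (X : ℕ → Ω → Bool) (a b : ℝ) : Prop :=
  ∀ (n : ℕ) (x : Fin (n + 1) → Bool),
    μ {ω | ∀ t : Fin (n + 1), X t ω = x t}
      = ENNReal.ofReal
          (statDist a b (x 0) * ∏ t : Fin n, transProb a b (x t.castSucc) (x t.succ))


/-- The binary entropy function in bits. -/
noncomputable def binEntropy2 (p : ℝ) : ℝ :=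
  -p * Real.logb 2 p - (1 - p) * Real.logb 2 (1 - p)

/-- The single-letter d-tilted information of the binary Hamming problem:
`ȷ(x, D) = -log₂ π_x - h₂(D)`. -/
noncomputable def jTilt (a b D : ℝ) (x : Bool) : ℝ :=
  -Real.logb 2 (statDist a b x) - binEntropy2 D

/-!
Nagaev–Guivarc'h method. The characteristic function of `∑_{t<n} g(X_t) / √n` at `s` is
`ν · T_θⁿ 1` with `θ = s / √n` and `T_θ = diag(exp(iθg)) P`, a contraction for the sup norm. If `h`
and `q` solve the Poisson equations `h - Ph = g` and `q - Pq = h² - (Ph)² - v`, then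
`1 + iθh - θ²q/2` is an eigenvector of `T_θ` for the eigenvalue `1 - vθ²/2` up to an error `o(θ²)`.
Iterating a contraction `n` times accumulates an error of at most `n · o(1/n)`, so `T_θⁿ 1` tends to
`exp(-vs²/2)` times the vector `1`. Averaging the second equation over the stationary law forces the
value of the variance `v`. For the binary chain, every centered function is an eigenvector of `P`
for the eigenvalue `1 - a - b`, so a Poisson equation is solved by dividing by `a + b`.
-/

open Filter Asymptotics Topology Matrix ProbabilityTheory
open scoped NNReal

section ApproximateEigenvector

variable {𝕜 E : Type*} [SeminormedAddCommGroup E]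

lemma norm_pow_apply_le [Semiring 𝕜] [Module 𝕜 E] {T : Module.End 𝕜 E}
    (hT : ∀ v, ‖T v‖ ≤ ‖v‖) (n : ℕ) (v : E) : ‖(T ^ n) v‖ ≤ ‖v‖ := by
  induction n with
  | zero => simp
  | succ n ih =>
    rw [pow_succ', Module.End.mul_apply]
    exact (hT _).trans ih

lemma norm_pow_apply_sub_smul_le [NormedField 𝕜] [NormedSpace 𝕜 E] {T : Module.End 𝕜 E}
    (hT : ∀ v, ‖T v‖ ≤ ‖v‖) {c : 𝕜} (hc : ‖c‖ ≤ 1) (w : E) (n : ℕ) :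
    ‖(T ^ n) w - c ^ n • w‖ ≤ n * ‖T w - c • w‖ := by
  induction n with
  | zero => simp
  | succ n ih =>
    have telescope : (T ^ (n + 1)) w - c ^ (n + 1) • w
        = T ((T ^ n) w - c ^ n • w) + c ^ n • (T w - c • w) := by
      rw [pow_succ', Module.End.mul_apply, map_sub, map_smul, smul_sub, smul_smul, ← pow_succ]
      abel
    have hcn : ‖c ^ n • (T w - c • w)‖ ≤ ‖T w - c • w‖ := by
      rw [norm_smul, norm_pow]
      exact mul_le_of_le_one_left (norm_nonneg _) (pow_le_one₀ (norm_nonneg _) hc)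
    calc ‖(T ^ (n + 1)) w - c ^ (n + 1) • w‖
        ≤ ‖T ((T ^ n) w - c ^ n • w)‖ + ‖c ^ n • (T w - c • w)‖ :=
          telescope ▸ norm_add_le _ _
      _ ≤ n * ‖T w - c • w‖ + ‖T w - c • w‖ := add_le_add ((hT _).trans ih) hcn
      _ = (n + 1 : ℕ) * ‖T w - c • w‖ := by push_cast; ring

lemma tendsto_pow_apply_of_approx_eigenvector [NormedField 𝕜] [NormedSpace 𝕜 E]
    {T : ℕ → Module.End 𝕜 E} (hT : ∀ n v, ‖T n v‖ ≤ ‖v‖) {c : ℕ → 𝕜} {w : ℕ → E} {u : E} {L : 𝕜}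
    (hc : ∀ᶠ n in atTop, ‖c n‖ ≤ 1) (hw : Tendsto w atTop (𝓝 u))
    (hTw : Tendsto (fun n : ℕ ↦ n * ‖T n (w n) - c n • w n‖) atTop (𝓝 0))
    (hL : Tendsto (fun n ↦ c n ^ n) atTop (𝓝 L)) :
    Tendsto (fun n ↦ (T n ^ n) u) atTop (𝓝 (L • u)) := by
  have h_start : Tendsto (fun n ↦ (T n ^ n) (u - w n)) atTop (𝓝 0) := by
    have h_norm : Tendsto (fun n ↦ ‖u - w n‖) atTop (𝓝 0) := by
      simpa using (hw.const_sub u).norm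
    exact squeeze_zero_norm (fun n ↦ norm_pow_apply_le (hT n) n _) h_norm
  have h_iterate : Tendsto (fun n ↦ (T n ^ n) (w n) - c n ^ n • w n) atTop (𝓝 0) :=
    squeeze_zero_norm' (hc.mono fun n hn ↦ norm_pow_apply_sub_smul_le (hT n) hn (w n) n) hTw
  have h_sum := (h_start.add h_iterate).add (hL.smul hw)
  rw [add_zero, zero_add] at h_sum
  refine h_sum.congr fun n ↦ ?_
  rw [map_sub]
  abel

lemma tendsto_div_sqrt_natCast (s : ℝ) : Tendsto (fun n : ℕ ↦ s / √n) atTop (𝓝 0) :=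
  tendsto_const_nhds.div_atTop (Real.tendsto_sqrt_atTop.comp tendsto_natCast_atTop_atTop)

lemma natCast_mul_sq_div_sqrt (s : ℝ) {n : ℕ} (hn : n ≠ 0) : n * (s / √n) ^ 2 = s ^ 2 := by
  rw [div_pow, Real.sq_sqrt n.cast_nonneg, mul_div_cancel₀ _ (Nat.cast_ne_zero.2 hn)]

lemma tendsto_one_sub_sq_div_sqrt_pow (v s : ℝ) :
    Tendsto (fun n : ℕ ↦ (1 - v * (s / √n) ^ 2 / 2) ^ n) atTop
      (𝓝 (Real.exp (-(v * s ^ 2 / 2)))) := by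
  refine (Real.tendsto_one_add_div_pow_exp (-(v * s ^ 2 / 2))).congr fun n ↦ ?_
  rw [div_pow, Real.sq_sqrt n.cast_nonneg]
  ring

lemma eventually_abs_one_sub_sq_le_one (v : ℝ≥0) :
    ∀ᶠ θ : ℝ in 𝓝 0, |1 - v * θ ^ 2 / 2| ≤ 1 := by
  have h_small : ∀ᶠ θ : ℝ in 𝓝 0, v * θ ^ 2 / 2 < 1 :=
    (by fun_prop : Continuous fun θ : ℝ ↦ v * θ ^ 2 / 2).tendsto' 0 0 (by simp)
      |>.eventually_lt_const one_pos
  filter_upwards [h_small] with θ hθ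
  have : 0 ≤ v * θ ^ 2 / 2 := by positivity
  rw [abs_le]
  constructor <;> linarith

theorem tendsto_pow_apply_div_sqrt [RCLike 𝕜] [NormedSpace 𝕜 E] {T : ℝ → Module.End 𝕜 E}
    (hT : ∀ θ v, ‖T θ v‖ ≤ ‖v‖) {w : ℝ → E} {u : E} {v : ℝ≥0} (hw : Tendsto w (𝓝 0) (𝓝 u))
    (hTw : (fun θ ↦ T θ (w θ) - ((1 - v * θ ^ 2 / 2 : ℝ) : 𝕜) • w θ) =o[𝓝 0] fun θ ↦ θ ^ 2)
    (s : ℝ) :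
    Tendsto (fun n : ℕ ↦ (T (s / √n) ^ n) u) atTop
      (𝓝 ((Real.exp (-(v * s ^ 2 / 2)) : 𝕜) • u)) := by
  have hθ := tendsto_div_sqrt_natCast s
  refine tendsto_pow_apply_of_approx_eigenvector (fun n ↦ hT _)
    (c := fun n : ℕ ↦ ((1 - v * (s / √n) ^ 2 / 2 : ℝ) : 𝕜)) ?_ (hw.comp hθ) ?_ ?_
  · filter_upwards [hθ.eventually (eventually_abs_one_sub_sq_le_one v)] with n hn
    rwa [RCLike.norm_ofReal]
  · have h_error := (isBigO_refl (fun n : ℕ ↦ (n : ℝ)) atTop).mul_isLittleO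
      (hTw.norm_left.comp_tendsto hθ)
    have h_bounded : (fun n : ℕ ↦ n * (s / √n) ^ 2) =O[atTop] fun _ ↦ (1 : ℝ) :=
      (isBigO_const_const (s ^ 2) one_ne_zero atTop).congr'
        ((eventually_ne_atTop 0).mono fun n hn ↦ (natCast_mul_sq_div_sqrt s hn).symm) .rfl
    exact (isLittleO_one_iff ℝ).1 (h_error.trans_isBigO h_bounded)
  · simpa only [Function.comp_def, RCLike.ofReal_pow] using
      (RCLike.continuous_ofReal (K := 𝕜)).tendsto _ |>.comp (tendsto_one_sub_sq_div_sqrt_pow v s)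

end ApproximateEigenvector

section SecondOrderExpansion

open Complex

lemma cexp_ofReal_mul_I_sub_isLittleO (x : ℝ) :
    (fun θ : ℝ ↦ exp ((θ * x : ℝ) * I) - (1 + θ * x * I - θ ^ 2 * (x ^ 2 / 2)))
      =o[𝓝 0] fun θ ↦ θ ^ 2 := by
  have h_tendsto : Tendsto (fun θ : ℝ ↦ ((θ * x : ℝ) : ℂ) * I) (𝓝 0) (𝓝 0) :=
    (by fun_prop : Continuous fun θ : ℝ ↦ ((θ * x : ℝ) : ℂ) * I).tendsto' 0 0 (by simp)
  have h_arg : (fun θ : ℝ ↦ (((θ * x : ℝ) : ℂ) * I) ^ 2) =O[𝓝 0] fun θ ↦ θ ^ 2 :=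
    IsBigO.pow (.of_bound |x| (.of_forall fun θ ↦ by simp [mul_comm])) 2
  refine ((exp_sub_sum_range_succ_isLittleO_pow 2).comp_tendsto h_tendsto
    |>.trans_isBigO h_arg).congr_left fun θ ↦ ?_
  simp only [Function.comp_apply, Finset.sum_range_succ, Finset.sum_range_zero, Nat.factorial,
    mul_pow, I_sq]
  push_cast
  ring

lemma ofReal_pow_three_mul_isLittleO {f : ℝ → ℂ} (hf : Continuous f) :
    (fun θ : ℝ ↦ (θ : ℂ) ^ 3 * f θ) =o[𝓝 0] fun θ ↦ θ ^ 2 := by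
  have h_cube : (fun θ : ℝ ↦ (θ : ℂ) ^ 3) =o[𝓝 0] fun θ : ℝ ↦ θ ^ 2 := by
    rw [← isLittleO_norm_left]
    simpa using (isLittleO_pow_pow (𝕜 := ℝ) (by norm_num : 2 < 3)).norm_left
  simpa using h_cube.mul_isBigO ((hf.tendsto 0).isBigO_one ℝ)

lemma cexp_mul_second_order_sub_isLittleO {h p q r v : ℝ} (hq : q - r = h ^ 2 - p ^ 2 - v) :
    (fun θ : ℝ ↦ exp ((θ * (h - p) : ℝ) * I) * (1 + θ * p * I - θ ^ 2 * (r / 2))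
      - (1 - v * θ ^ 2 / 2) * (1 + θ * h * I - θ ^ 2 * (q / 2)))
      =o[𝓝 0] fun θ ↦ θ ^ 2 := by
  have h_factor : Continuous fun θ : ℝ ↦ 1 + θ * p * I - (θ : ℂ) ^ 2 * (r / 2) := by fun_prop
  have h_exp := (cexp_ofReal_mul_I_sub_isLittleO (h - p)).mul_isBigO
    ((h_factor.tendsto 0).isBigO_one ℝ)
  have h_cubic := ofReal_pow_three_mul_isLittleO
    (f := fun θ ↦ (v * h - (h - p) * r - (h - p) ^ 2 * p) / 2 * I
      + θ * ((h - p) ^ 2 * r - v * q) / 4) (by fun_prop)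
  simp only [mul_one] at h_exp
  refine (h_exp.add h_cubic).congr_left fun θ ↦ ?_
  have hqc : (q - r : ℂ) = h ^ 2 - p ^ 2 - v := by exact_mod_cast hq
  push_cast
  linear_combination - (θ : ℂ) ^ 2 * (h - p) * p * I_sq - (θ : ℂ) ^ 2 / 2 * hqc

end SecondOrderExpansion

section FourierTransition

open Complex

variable {S : Type*}

/-- The vector `1 + iθ h - θ² q / 2`: for suitable correctors `h` and `q` it is an eigenvector of
the twisted transition matrix up to `o(θ²)`. -/
noncomputable def quasiEigenvector (h q : S → ℝ) (θ : ℝ) (x : S) : ℂ :=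
  1 + θ * h x * I - θ ^ 2 * (q x / 2)

lemma tendsto_quasiEigenvector (h q : S → ℝ) :
    Tendsto (quasiEigenvector h q) (𝓝 0) (𝓝 1) := by
  have h_cont : Continuous (quasiEigenvector h q) := by
    unfold quasiEigenvector
    fun_prop
  exact h_cont.tendsto' 0 1 (by ext; simp [quasiEigenvector])

variable [Fintype S]

lemma map_ofReal_mulVec (P : Matrix S S ℝ) (f : S → ℝ) :
    P.map (↑) *ᵥ (fun x ↦ (f x : ℂ)) = fun x ↦ ((P *ᵥ f) x : ℂ) :=
  funext fun x ↦ (RingHom.map_mulVec ofRealHom P f x).symm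

variable {P : Matrix S S ℝ}

lemma map_ofReal_mulVec_one (hP : P *ᵥ 1 = 1) : P.map ((↑) : ℝ → ℂ) *ᵥ 1 = 1 := by
  have h_one := map_ofReal_mulVec P 1
  rw [hP] at h_one
  simpa [Pi.one_def] using h_one

lemma map_ofReal_mulVec_quasiEigenvector (hP : P *ᵥ 1 = 1) (h q : S → ℝ) (θ : ℝ) :
    P.map (↑) *ᵥ quasiEigenvector h q θ = quasiEigenvector (P *ᵥ h) (P *ᵥ q) θ := by
  have h_decomp (h q : S → ℝ) : quasiEigenvector h q θ =
      1 + (θ * I : ℂ) • (fun x ↦ (h x : ℂ)) - (θ ^ 2 / 2 : ℂ) • (fun x ↦ (q x : ℂ)) := by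
    ext x
    simp only [quasiEigenvector, Pi.sub_apply, Pi.add_apply, Pi.smul_apply, smul_eq_mul,
      Pi.one_apply]
    ring
  rw [h_decomp, h_decomp, mulVec_sub, mulVec_add, mulVec_smul, mulVec_smul, map_ofReal_mulVec,
    map_ofReal_mulVec, map_ofReal_mulVec_one hP]

variable [DecidableEq S]

/-- The transition matrix `P` with row `x` twisted by the unimodular factor `exp(iθ g(x))`. Its
powers carry the characteristic functions of the additive functionals `∑ g(X_t)` of a chain with
transition matrix `P`. -/
noncomputable def fourierTransition (P : Matrix S S ℝ) (g : S → ℝ) (θ : ℝ) : Matrix S S ℂ :=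
  diagonal (fun x ↦ exp ((θ * g x : ℝ) * I)) * P.map (↑)

lemma fourierTransition_mulVec_apply (P : Matrix S S ℝ) (g : S → ℝ) (θ : ℝ) (v : S → ℂ) (x : S) :
    (fourierTransition P g θ *ᵥ v) x = exp ((θ * g x : ℝ) * I) * (P.map (↑) *ᵥ v) x := by
  rw [fourierTransition, ← mulVec_mulVec, mulVec_diagonal]

lemma norm_map_ofReal_mulVec_le (hP : P ∈ rowStochastic ℝ S) (v : S → ℂ) :
    ‖P.map ((↑) : ℝ → ℂ) *ᵥ v‖ ≤ ‖v‖ := by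
  refine (pi_norm_le_iff_of_nonneg (norm_nonneg v)).2 fun x ↦ ?_
  calc ‖∑ y, (P x y : ℂ) * v y‖ ≤ ∑ y, P x y * ‖v‖ := by
        refine norm_sum_le_of_le _ fun y _ ↦ ?_
        rw [norm_mul, norm_real, Real.norm_of_nonneg (nonneg_of_mem_rowStochastic hP)]
        exact mul_le_mul_of_nonneg_left (norm_le_pi_norm v y) (nonneg_of_mem_rowStochastic hP)
    _ = ‖v‖ := by rw [← Finset.sum_mul, sum_row_of_mem_rowStochastic hP, one_mul]

lemma norm_fourierTransition_mulVec_le (hP : P ∈ rowStochastic ℝ S) (g : S → ℝ) (θ : ℝ)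
    (v : S → ℂ) : ‖fourierTransition P g θ *ᵥ v‖ ≤ ‖v‖ := by
  refine (pi_norm_le_iff_of_nonneg (norm_nonneg v)).2 fun x ↦ ?_
  rw [fourierTransition_mulVec_apply, norm_mul, norm_exp_ofReal_mul_I, one_mul]
  exact (norm_le_pi_norm _ x).trans (norm_map_ofReal_mulVec_le hP v)

lemma fourierTransition_mulVec_quasiEigenvector_sub_isLittleO (hP : P *ᵥ 1 = 1)
    {g h q : S → ℝ} {v : ℝ} (hg : h - P *ᵥ h = g)
    (hq : q - P *ᵥ q = h ^ 2 - (P *ᵥ h) ^ 2 - fun _ ↦ v) :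
    (fun θ ↦ fourierTransition P g θ *ᵥ quasiEigenvector h q θ
      - ((1 - v * θ ^ 2 / 2 : ℝ) : ℂ) • quasiEigenvector h q θ) =o[𝓝 0] fun θ ↦ θ ^ 2 := by
  refine isLittleO_pi.2 fun x ↦ ?_
  refine (cexp_mul_second_order_sub_isLittleO (congrFun hq x)).congr_left fun θ ↦ ?_
  rw [Pi.sub_apply, Pi.smul_apply, fourierTransition_mulVec_apply,
    map_ofReal_mulVec_quasiEigenvector hP, ← hg]
  simp [quasiEigenvector]

theorem tendsto_fourierTransition_pow_mulVec_one (hP : P ∈ rowStochastic ℝ S)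
    {g h q : S → ℝ} {v : ℝ≥0} (hg : h - P *ᵥ h = g)
    (hq : q - P *ᵥ q = h ^ 2 - (P *ᵥ h) ^ 2 - fun _ ↦ (v : ℝ)) (s : ℝ) :
    Tendsto (fun n : ℕ ↦ fourierTransition P g (s / √n) ^ n *ᵥ 1) atTop
      (𝓝 ((Real.exp (-(v * s ^ 2 / 2)) : ℂ) • 1)) := by
  have h_lim := tendsto_pow_apply_div_sqrt (𝕜 := ℂ) (T := fun θ ↦ toLin' (fourierTransition P g θ))
    (norm_fourierTransition_mulVec_le hP g) (tendsto_quasiEigenvector h q)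
    (fourierTransition_mulVec_quasiEigenvector_sub_isLittleO
      (one_vecMul_of_mem_rowStochastic hP) hg hq) s
  simp only [← toLin'_pow, toLin'_apply] at h_lim
  exact h_lim

end FourierTransition

lemma sum_path_prod_eq_dotProduct_pow_mulVec {S R : Type*} [Fintype S] [DecidableEq S]
    [CommSemiring R] (A : Matrix S S R) (u v : S → R) (n : ℕ) :
    ∑ x : Fin (n + 1) → S,
        u (x 0) * (∏ t : Fin n, A (x t.castSucc) (x t.succ)) * v (x (Fin.last n))
      = u ⬝ᵥ (A ^ n *ᵥ v) := by
  induction n generalizing u with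
  | zero =>
    rw [← (Equiv.funUnique (Fin 1) S).symm.sum_comp]
    simp [dotProduct]
  | succ n ih =>
    have h_cons (x : Fin (n + 1) → S) (y : S) :
        u y * (∏ t : Fin (n + 1), A ((Fin.cons y x : Fin (n + 2) → S) t.castSucc) (x t))
          = u y * A y (x 0) * ∏ t : Fin n, A (x t.castSucc) (x t.succ) := by
      rw [Fin.prod_univ_succ, ← mul_assoc]
      rfl
    rw [pow_succ', ← mulVec_mulVec, dotProduct_mulVec, ← ih,
      ← (Fin.consEquiv fun _ : Fin (n + 2) ↦ S).sum_comp, Fintype.sum_prod_type_right]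
    refine Finset.sum_congr rfl fun x _ ↦ ?_
    simp only [Fin.consEquiv_apply, Fin.cons_zero, Fin.cons_succ, h_cons, ← Fin.succ_last,
      ← Finset.sum_mul, vecMul, dotProduct]

section MarkovChain

variable {S Ω : Type*} [MeasurableSpace Ω]

/-- `X` is a time-homogeneous Markov chain with initial distribution `ν` and transition matrix `P`
under `μ`, expressed through the probabilities of its finite paths. -/
def IsMarkovChain (μ : Measure Ω) (X : ℕ → Ω → S) (ν : S → ℝ) (P : Matrix S S ℝ) : Prop :=
  ∀ (n : ℕ) (x : Fin (n + 1) → S), μ.real {ω | ∀ t : Fin (n + 1), X t ω = x t}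
    = ν (x 0) * ∏ t : Fin n, P (x t.castSucc) (x t.succ)

namespace IsMarkovChain

variable [Fintype S] [MeasurableSpace S] [MeasurableSingletonClass S] {μ : Measure Ω}
  [IsProbabilityMeasure μ] {X : ℕ → Ω → S} {ν : S → ℝ} {P : Matrix S S ℝ}

lemma integral_path {E : Type*} [NormedAddCommGroup E] [NormedSpace ℝ E] [CompleteSpace E]
    (hM : IsMarkovChain μ X ν P) (hX : ∀ t, Measurable (X t)) {n : ℕ} (F : (Fin (n + 1) → S) → E) :
    ∫ ω, F (fun t ↦ X t ω) ∂μ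
      = ∑ x, (ν (x 0) * ∏ t : Fin n, P (x t.castSucc) (x t.succ)) • F x := by
  have h_path : Measurable fun ω ↦ fun t : Fin (n + 1) ↦ X t ω := measurable_pi_lambda _ (hX ·)
  have := Measure.isProbabilityMeasure_map (μ := μ) h_path.aemeasurable
  rw [← integral_map (f := F) h_path.aemeasurable
    StronglyMeasurable.of_discrete.aestronglyMeasurable, integral_fintype .of_finite]
  refine Finset.sum_congr rfl fun x _ ↦ ?_
  rw [map_measureReal_apply h_path (measurableSet_singleton x), ← hM n x]
  simp [Set.preimage, funext_iff]

lemma sum_initial (hM : IsMarkovChain μ X ν P) (hX : ∀ t, Measurable (X t)) : ∑ x, ν x = 1 := by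
  have h_one := hM.integral_path hX (n := 0) fun _ ↦ (1 : ℝ)
  rw [← (Equiv.funUnique (Fin 1) S).symm.sum_comp] at h_one
  simpa using h_one.symm

variable [DecidableEq S]

lemma integral_prod (hM : IsMarkovChain μ X ν P) (hX : ∀ t, Measurable (X t)) (hP : P *ᵥ 1 = 1)
    (z : S → ℂ) (n : ℕ) :
    ∫ ω, ∏ t ∈ Finset.range (n + 1), z (X t ω) ∂μ
      = (fun x ↦ (ν x : ℂ)) ⬝ᵥ ((diagonal z * P.map (↑)) ^ (n + 1) *ᵥ 1) := by
  have h_last : (diagonal z * P.map (↑)) *ᵥ 1 = z := by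
    ext x
    rw [← mulVec_mulVec, map_ofReal_mulVec_one hP, mulVec_diagonal, Pi.one_apply, mul_one]
  simp only [Finset.prod_range]
  rw [hM.integral_path hX fun x ↦ ∏ t, z (x t), pow_succ, ← mulVec_mulVec, h_last,
    ← sum_path_prod_eq_dotProduct_pow_mulVec]
  refine Finset.sum_congr rfl fun x _ ↦ ?_
  simp only [diagonal_mul, map_apply, Finset.prod_mul_distrib, Fin.prod_univ_castSucc,
    Complex.real_smul]
  push_cast
  ring

lemma charFun_map_sum_div (hM : IsMarkovChain μ X ν P) (hX : ∀ t, Measurable (X t))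
    (hP : P *ᵥ 1 = 1) (g : S → ℝ) (n : ℕ) (c s : ℝ) :
    charFun (μ.map fun ω ↦ (∑ t ∈ Finset.range (n + 1), g (X t ω)) / c) s
      = (fun x ↦ (ν x : ℂ)) ⬝ᵥ (fourierTransition P g (s / c) ^ (n + 1) *ᵥ 1) := by
  have (t : ℕ) : Measurable fun ω ↦ g (X t ω) := (measurable_of_finite g).comp (hX t)
  have h_exp (ω : Ω) :
      Complex.exp (s * ((∑ t ∈ Finset.range (n + 1), g (X t ω)) / c : ℝ) * Complex.I)
        = ∏ t ∈ Finset.range (n + 1), Complex.exp ((s / c * g (X t ω) : ℝ) * Complex.I) := by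
    rw [← Complex.exp_sum, ← Finset.sum_mul, ← Complex.ofReal_sum, ← Finset.mul_sum,
      ← Complex.ofReal_mul, ← mul_div_assoc, mul_div_right_comm]
  rw [charFun_apply_real, integral_map (by fun_prop) (by fun_prop)]
  simp only [h_exp]
  exact hM.integral_prod hX hP (fun x ↦ Complex.exp ((s / c * g x : ℝ) * Complex.I)) n

theorem tendstoInDistribution_sum_div_sqrt (hM : IsMarkovChain μ X ν P)
    (hX : ∀ t, Measurable (X t)) (hP : P ∈ rowStochastic ℝ S)
    {g h q : S → ℝ} {v : ℝ≥0} (hg : h - P *ᵥ h = g)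
    (hq : q - P *ᵥ q = h ^ 2 - (P *ᵥ h) ^ 2 - fun _ ↦ (v : ℝ))
    {Ω' : Type*} [MeasurableSpace Ω'] {μ' : Measure Ω'} [IsProbabilityMeasure μ'] {Y : Ω' → ℝ}
    (hY : HasLaw Y (gaussianReal 0 v) μ') :
    TendstoInDistribution (fun (n : ℕ) ω ↦ (∑ t ∈ Finset.range n, g (X t ω)) / √n) atTop Y
      (fun _ ↦ μ) μ' where
  forall_aemeasurable n := by
    have (t : ℕ) : Measurable fun ω ↦ g (X t ω) := (measurable_of_finite g).comp (hX t)
    fun_prop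
  aemeasurable_limit := hY.aemeasurable
  tendsto := by
    refine ProbabilityMeasure.tendsto_iff_tendsto_charFun.2 fun s ↦ ?_
    have h_lim : (fun x ↦ (ν x : ℂ)) ⬝ᵥ ((Real.exp (-(v * s ^ 2 / 2)) : ℂ) • 1)
        = charFun (μ'.map Y) s := by
      have h_sum : ∑ x, (ν x : ℂ) = 1 := by exact_mod_cast hM.sum_initial hX
      rw [hY.map_eq, charFun_gaussianReal, dotProduct_smul, dotProduct_one, h_sum]
      simp
    have h_cont : Continuous fun u : S → ℂ ↦ (fun x ↦ (ν x : ℂ)) ⬝ᵥ u := by fun_prop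
    refine h_lim ▸ ((h_cont.tendsto _).comp
      (tendsto_fourierTransition_pow_mulVec_one hP hg hq s)).congr' ?_
    filter_upwards [eventually_ne_atTop 0] with n hn
    obtain ⟨m, rfl⟩ := Nat.exists_eq_succ_of_ne_zero hn
    exact (hM.charFun_map_sum_div hX (one_vecMul_of_mem_rowStochastic hP) g m _ s).symm

end IsMarkovChain

end MarkovChain

section BinaryMarkovChain

variable {a b : ℝ}

lemma dotProduct_bool {R : Type*} [NonUnitalNonAssocSemiring R] (u v : Bool → R) :
    u ⬝ᵥ v = u true * v true + u false * v false :=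
  Fintype.sum_bool _

lemma statDist_dotProduct (f : Bool → ℝ) :
    statDist a b ⬝ᵥ f = (a * f true + b * f false) / (a + b) := by
  simp only [dotProduct_bool, statDist, if_true, Bool.false_eq_true, if_false]
  ring

lemma statDist_dotProduct_const (hab : a + b ≠ 0) (c : ℝ) :
    statDist a b ⬝ᵥ (fun _ ↦ c) = c := by
  rw [statDist_dotProduct]
  field_simp

lemma statDist_dotProduct_sub_mean (hab : a + b ≠ 0) (f : Bool → ℝ) :
    statDist a b ⬝ᵥ (f - fun _ ↦ statDist a b ⬝ᵥ f) = 0 := by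
  rw [dotProduct_sub, statDist_dotProduct_const hab, sub_self]

lemma statDist_dotProduct_sq_of_centered (hab : a + b ≠ 0) {f : Bool → ℝ}
    (hf : statDist a b ⬝ᵥ f = 0) :
    statDist a b ⬝ᵥ f ^ 2 = a * b / (a + b) ^ 2 * (f true - f false) ^ 2 := by
  rw [statDist_dotProduct, div_eq_zero_iff, or_iff_left hab] at hf
  rw [statDist_dotProduct, Pi.pow_apply, Pi.pow_apply]
  field_simp
  linear_combination (a * f true + b * f false) * hf

lemma statDist_nonneg (ha : 0 ≤ a) (hb : 0 ≤ b) (x : Bool) : 0 ≤ statDist a b x := by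
  unfold statDist
  split <;> positivity

lemma of_transProb_mem_rowStochastic (ha0 : 0 ≤ a) (ha1 : a ≤ 1) (hb0 : 0 ≤ b) (hb1 : b ≤ 1) :
    of (transProb a b) ∈ rowStochastic ℝ Bool := by
  refine mem_rowStochastic_iff_sum.2 ⟨?_, ?_⟩
  · rintro (_ | _) (_ | _) <;> simp [transProb, *]
  · rintro (_ | _) <;> simp [transProb]

lemma transProb_mulVec_of_centered (hab : a + b ≠ 0) {f : Bool → ℝ}
    (hf : statDist a b ⬝ᵥ f = 0) : of (transProb a b) *ᵥ f = (1 - a - b) • f := by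
  rw [statDist_dotProduct, div_eq_zero_iff, or_iff_left hab] at hf
  ext x
  cases x <;>
    simp only [mulVec, dotProduct_bool, of_apply, transProb, if_true, Bool.false_eq_true, if_false,
      Pi.smul_apply, smul_eq_mul] <;>
    linear_combination hf

lemma inv_smul_sub_transProb_mulVec (hab : a + b ≠ 0) {f : Bool → ℝ}
    (hf : statDist a b ⬝ᵥ f = 0) :
    (a + b)⁻¹ • f - of (transProb a b) *ᵥ ((a + b)⁻¹ • f) = f := by
  rw [mulVec_smul, transProb_mulVec_of_centered hab hf]
  ext x
  simp only [Pi.sub_apply, Pi.smul_apply, smul_eq_mul]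
  field_simp
  ring

lemma statDist_dotProduct_corrector_variance (hab : a + b ≠ 0) {f : Bool → ℝ}
    (hf : statDist a b ⬝ᵥ f = 0) :
    statDist a b ⬝ᵥ (((a + b)⁻¹ • f) ^ 2 - (of (transProb a b) *ᵥ ((a + b)⁻¹ • f)) ^ 2)
      = a * b * (2 - a - b) / (a + b) ^ 3 * (f true - f false) ^ 2 := by
  have h_smul : ((a + b)⁻¹ • f) ^ 2 - (of (transProb a b) *ᵥ ((a + b)⁻¹ • f)) ^ 2
      = ((2 - a - b) / (a + b)) • f ^ 2 := by
    rw [mulVec_smul, transProb_mulVec_of_centered hab hf]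
    ext x
    simp only [Pi.sub_apply, Pi.pow_apply, Pi.smul_apply, smul_eq_mul]
    field_simp
    ring
  rw [h_smul, dotProduct_smul, statDist_dotProduct_sq_of_centered hab hf, smul_eq_mul]
  field_simp

lemma IsStatBinMarkov.isMarkovChain {Ω : Type*} [MeasurableSpace Ω] {μ : Measure Ω}
    {X : ℕ → Ω → Bool} (hM : IsStatBinMarkov μ X a b) (ha0 : 0 ≤ a) (ha1 : a ≤ 1) (hb0 : 0 ≤ b)
    (hb1 : b ≤ 1) : IsMarkovChain μ X (statDist a b) (of (transProb a b)) := fun n x ↦ by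
  rw [measureReal_def, hM n x]
  exact ENNReal.toReal_ofReal <| mul_nonneg (statDist_nonneg ha0 hb0 _) <|
    Finset.prod_nonneg fun t _ ↦
      nonneg_of_mem_rowStochastic (of_transProb_mem_rowStochastic ha0 ha1 hb0 hb1)

theorem stmt_19_general {Ω : Type*} [MeasurableSpace Ω] {μ : Measure Ω} [IsProbabilityMeasure μ]
    (ha0 : 0 ≤ a) (ha1 : a ≤ 1) (hb0 : 0 ≤ b) (hb1 : b ≤ 1) (hab : 0 < a + b)
    {X : ℕ → Ω → Bool} (hX : ∀ t, Measurable (X t)) (hM : IsStatBinMarkov μ X a b) (φ : Bool → ℝ)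
    {Ω' : Type*} [MeasurableSpace Ω'] {μ' : Measure Ω'} [IsProbabilityMeasure μ'] {Y : Ω' → ℝ}
    (hY : HasLaw Y (gaussianReal 0 (a * b * (2 - a - b) / (a + b) ^ 3
      * (φ true - φ false) ^ 2).toNNReal) μ') :
    TendstoInDistribution
      (fun (n : ℕ) ω ↦ ((∑ t ∈ Finset.range n, φ (X t ω)) - n * statDist a b ⬝ᵥ φ) / √n)
      atTop Y (fun _ ↦ μ) μ' := by
  set v : ℝ := a * b * (2 - a - b) / (a + b) ^ 3 * (φ true - φ false) ^ 2 with hv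
  have hv0 : 0 ≤ v := by
    have : 0 ≤ 2 - a - b := by linarith
    positivity
  set g : Bool → ℝ := φ - fun _ ↦ statDist a b ⬝ᵥ φ with hg
  set h : Bool → ℝ := (a + b)⁻¹ • g
  have h_centered : statDist a b ⬝ᵥ g = 0 := statDist_dotProduct_sub_mean hab.ne' φ
  have h_variance : statDist a b ⬝ᵥ (h ^ 2 - (of (transProb a b) *ᵥ h) ^ 2) = v := by
    rw [statDist_dotProduct_corrector_variance hab.ne' h_centered, hv]
    simp [hg]
  have h_corrector := inv_smul_sub_transProb_mulVec hab.ne'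
    (statDist_dotProduct_sub_mean hab.ne' (h ^ 2 - (of (transProb a b) *ᵥ h) ^ 2))
  rw [h_variance] at h_corrector
  have h_clt := (hM.isMarkovChain ha0 ha1 hb0 hb1).tendstoInDistribution_sum_div_sqrt hX
    (of_transProb_mem_rowStochastic ha0 ha1 hb0 hb1) (v := v.toNNReal)
    (inv_smul_sub_transProb_mulVec hab.ne' h_centered)
    (by rw [Real.coe_toNNReal v hv0]; exact h_corrector) hY
  simpa [hg] using h_clt

end BinaryMarkovChain

section TiltedInformation

variable {a b : ℝ}

lemma statDist_dotProduct_jTilt (hab : a + b ≠ 0) (D : ℝ) :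
    statDist a b ⬝ᵥ jTilt a b D = binEntropy2 (a / (a + b)) - binEntropy2 D := by
  have h_compl : 1 - a / (a + b) = b / (a + b) := by
    field_simp
    ring
  rw [statDist_dotProduct, binEntropy2.eq_1 (a / (a + b)), h_compl]
  simp only [jTilt, statDist, if_true, Bool.false_eq_true, if_false]
  field_simp
  ring

lemma jTilt_true_sub_false (ha : a ≠ 0) (hb : b ≠ 0) (hab : a + b ≠ 0) (D : ℝ) :
    jTilt a b D true - jTilt a b D false = -Real.logb 2 (a / b) := by
  simp only [jTilt, statDist, if_true, Bool.false_eq_true, if_false]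
  rw [Real.logb_div ha hab, Real.logb_div hb hab, Real.logb_div ha hb]
  ring

lemma asymptoticVariance_pos (ha0 : 0 < a) (ha1 : a < 1) (hb0 : 0 < b) (hb1 : b < 1) (hab : a ≠ b) :
    0 < a * b * (2 - a - b) / (a + b) ^ 3 * Real.logb 2 (a / b) ^ 2 := by
  have h_log : Real.logb 2 (a / b) ≠ 0 :=
    Real.logb_ne_zero_of_pos_of_ne_one one_lt_two (div_pos ha0 hb0)
      (mt (div_eq_one_iff_eq hb0.ne').1 hab)
  have : 0 < 2 - a - b := by linarith
  positivity

end TiltedInformation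

open BoundedContinuousFunction in
lemma tendsto_integral_of_tendstoInDistribution {ι E Ω' : Type*} {Ω : ι → Type*}
    [∀ i, MeasurableSpace (Ω i)] [MeasurableSpace Ω'] {μ : ∀ i, Measure (Ω i)}
    [∀ i, IsProbabilityMeasure (μ i)] {μ' : Measure Ω'} [IsProbabilityMeasure μ']
    [TopologicalSpace E] [MeasurableSpace E] [OpensMeasurableSpace E]
    {X : ∀ i, Ω i → E} {Z : Ω' → E} {l : Filter ι}
    (h : TendstoInDistribution X l Z μ μ') (f : E →ᵇ ℝ) :
    Tendsto (fun i ↦ ∫ ω, f (X i ω) ∂μ i) l (𝓝 (∫ ω, f (Z ω) ∂μ')) := by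
  have h_lim := ProbabilityMeasure.tendsto_iff_forall_integral_tendsto.1 h.tendsto f
  have h_eq (i : ι) : ∫ x, f x ∂(μ i).map (X i) = ∫ ω, f (X i ω) ∂μ i :=
    integral_map (h.forall_aemeasurable i) f.continuous.measurable.aestronglyMeasurable
  rw [← integral_map h.aemeasurable_limit f.continuous.measurable.aestronglyMeasurable]
  exact h_lim.congr h_eq

open Filter ProbabilityTheory BoundedContinuousFunction in
/-- central limit theorem for the block d-tilted sum. For a stationary
binary Markov chain with `a ≠ b`, `(J_n(D) - n μ_D)/√n` converges in distribution
(weak convergence tested against bounded continuous functions) to the centered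
Gaussian law with variance `V_sl = (a b (2-a-b)/(a+b)³) log₂²(a/b) > 0`; the limit
does not depend on `D`. -/
theorem stmt_19 {Ω : Type*} [MeasurableSpace Ω] (μ : Measure Ω) [IsProbabilityMeasure μ]
    (a b D : ℝ) (ha0 : 0 < a) (ha1 : a < 1) (hb0 : 0 < b) (hb1 : b < 1)
    (hab : a ≠ b)
    (hD0 : 0 < D) (hD : D < min (b / (a + b)) (a / (a + b)))
    (X : ℕ → Ω → Bool) (hX : ∀ t, Measurable (X t))
    (hM : IsStatBinMarkov μ X a b)
    (Vsl : ℝ)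
    (hV : Vsl = a * b * (2 - a - b) / (a + b) ^ 3 * (Real.logb 2 (a / b)) ^ 2) :
    0 < Vsl
    ∧ ∀ f : ℝ →ᵇ ℝ,
        Tendsto
          (fun n : ℕ =>
            ∫ ω, f (((∑ t ∈ Finset.range n, jTilt a b D (X t ω))
                - n * (binEntropy2 (a / (a + b)) - binEntropy2 D)) / Real.sqrt n) ∂μ)
          atTop
          (nhds (∫ x, f x ∂(gaussianReal 0 (Real.toNNReal Vsl)))) := by
  subst hV
  have hs : 0 < a + b := add_pos ha0 hb0
  refine ⟨asymptoticVariance_pos ha0 ha1 hb0 hb1 hab, fun f ↦ ?_⟩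
  have h_clt := stmt_19_general ha0.le ha1.le hb0.le hb1.le hs hX hM (jTilt a b D) HasLaw.id
  rw [statDist_dotProduct_jTilt hs.ne', jTilt_true_sub_false ha0.ne' hb0.ne' hs.ne',
    neg_sq] at h_clt
  exact tendsto_integral_of_tendstoInDistribution h_clt f
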